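/- arXiv:1803.05882 — 5 statements merged into one kernel-verified Lean document; each statement's English description precedes it below -/
import Mathlib

section
/- Let f be an ℝ-linear isometric equivalence of ℍ onto itself with f(1) = 1 and with determinant (as an ℝ-linear endomorphism of ℍ) equal to 1. Then there exists a unit quaternion u such that f(x) = u * x * u⁻¹ for all x ∈ ℍ. (Equivalently, the homomorphism ψ : S³ → SO(3) given by conjugation is surjective onto the rotations of the purely imaginary quaternions.) -/
set_option linter.unusedSimpArgs false

theorem conj_one_re : (1 : Quaternion ℝ).re = 1 := rfl
theorem conj_one_imI : (1 : Quaternion ℝ).imI = 0 := rfl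
theorem conj_one_imJ : (1 : Quaternion ℝ).imJ = 0 := rfl
theorem conj_one_imK : (1 : Quaternion ℝ).imK = 0 := rfl
theorem conj_zero_re : (0 : Quaternion ℝ).re = 0 := rfl
theorem conj_zero_imI : (0 : Quaternion ℝ).imI = 0 := rfl
theorem conj_zero_imJ : (0 : Quaternion ℝ).imJ = 0 := rfl
theorem conj_zero_imK : (0 : Quaternion ℝ).imK = 0 := rfl

theorem conj_aux_exists (a b c i j k : Quaternion ℝ)
    (hi : i = ⟨0, 1, 0, 0⟩) (hj : j = ⟨0, 0, 1, 0⟩) (hk : k = ⟨0, 0, 0, 1⟩) :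
    ∃ x : Quaternion ℝ, x - a * x * i - b * x * j - c * x * k ≠ 0 := by
  by_contra! h
  have h0 := congrArg (fun q : Quaternion ℝ => q.re) (h 1)
  have h1 := congrArg (fun q : Quaternion ℝ => q.imI) (h i)
  have h2 := congrArg (fun q : Quaternion ℝ => q.imJ) (h j)
  have h3 := congrArg (fun q : Quaternion ℝ => q.imK) (h k)
  have i0 : i.re = 0 := by rw [hi]
  have i1 : i.imI = 1 := by rw [hi]
  have i2 : i.imJ = 0 := by rw [hi]
  have i3 : i.imK = 0 := by rw [hi]
  have j0 : j.re = 0 := by rw [hj]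
  have j1 : j.imI = 0 := by rw [hj]
  have j2 : j.imJ = 1 := by rw [hj]
  have j3 : j.imK = 0 := by rw [hj]
  have k0 : k.re = 0 := by rw [hk]
  have k1 : k.imI = 0 := by rw [hk]
  have k2 : k.imJ = 0 := by rw [hk]
  have k3 : k.imK = 1 := by rw [hk]
  clear hi hj hk
  simp [conj_one_re, conj_one_imI, conj_one_imJ, conj_one_imK, conj_zero_re, conj_zero_imI, conj_zero_imJ, conj_zero_imK, i0, i1, i2, i3, j0, j1, j2, j3, k0, k1, k2, k3] at h0 h1 h2 h3
  linarith

theorem conj_aux_cross (a b c : Quaternion ℝ)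
    (a0 : a.re = 0) (b0 : b.re = 0) (c0 : c.re = 0)
    (aa : a.imI * a.imI + a.imJ * a.imJ + a.imK * a.imK = 1)
    (bb : b.imI * b.imI + b.imJ * b.imJ + b.imK * b.imK = 1)
    (cc : c.imI * c.imI + c.imJ * c.imJ + c.imK * c.imK = 1)
    (ab : a.imI * b.imI + a.imJ * b.imJ + a.imK * b.imK = 0)
    (det : c.imI * (a.imJ * b.imK - a.imK * b.imJ) + c.imJ * (a.imK * b.imI - a.imI * b.imK)
      + c.imK * (a.imI * b.imJ - a.imJ * b.imI) = 1) :
    a * a = -1 ∧ b * b = -1 ∧ a * b = c ∧ b * a = -c := by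
  have key : (c.imI - (a.imJ * b.imK - a.imK * b.imJ)) ^ 2
      + (c.imJ - (a.imK * b.imI - a.imI * b.imK)) ^ 2
      + (c.imK - (a.imI * b.imJ - a.imJ * b.imI)) ^ 2 = 0 := by
    have e : (a.imJ * b.imK - a.imK * b.imJ) ^ 2 + (a.imK * b.imI - a.imI * b.imK) ^ 2
      + (a.imI * b.imJ - a.imJ * b.imI) ^ 2 = 1 := by
      have : (a.imJ * b.imK - a.imK * b.imJ) ^ 2 + (a.imK * b.imI - a.imI * b.imK) ^ 2
        + (a.imI * b.imJ - a.imJ * b.imI) ^ 2 =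
        (a.imI * a.imI + a.imJ * a.imJ + a.imK * a.imK) *
        (b.imI * b.imI + b.imJ * b.imJ + b.imK * b.imK) -
        (a.imI * b.imI + a.imJ * b.imJ + a.imK * b.imK) ^ 2 := by ring
      rw [this, aa, bb, ab]; norm_num
    linear_combination cc + e - 2 * det
  have k1 : c.imI - (a.imJ * b.imK - a.imK * b.imJ) = 0 := by
    apply pow_eq_zero_iff (two_ne_zero) |>.1; nlinarith
  have k2 : c.imJ - (a.imK * b.imI - a.imI * b.imK) = 0 := by
    apply pow_eq_zero_iff (two_ne_zero) |>.1; nlinarith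
  have k3 : c.imK - (a.imI * b.imJ - a.imJ * b.imI) = 0 := by
    apply pow_eq_zero_iff (two_ne_zero) |>.1; nlinarith
  refine ⟨?_, ?_, ?_, ?_⟩ <;> ext <;> simp [a0, b0, c0, conj_one_re, conj_one_imI, conj_one_imJ, conj_one_imK, conj_zero_re, conj_zero_imI, conj_zero_imJ, conj_zero_imK] <;> linarith

/-- Every ℝ-linear isometric equivalence of `ℍ` fixing `1` and with determinant `1`
is conjugation by a unit quaternion; i.e. `ψ : S³ → SO(3)` is surjective. -/
theorem conj_surjective_onto_rotations (f : Quaternion ℝ ≃ₗᵢ[ℝ] Quaternion ℝ)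
    (hf1 : f 1 = 1) (hdet : LinearMap.det f.toLinearEquiv.toLinearMap = 1) :
    ∃ u : Quaternion ℝ, ‖u‖ = 1 ∧ ∀ x : Quaternion ℝ, f x = u * x * u⁻¹ := by
  obtain ⟨i, hi⟩ : ∃ i : Quaternion ℝ, i = ⟨0, 1, 0, 0⟩ := ⟨_, rfl⟩
  obtain ⟨j, hj⟩ : ∃ i : Quaternion ℝ, i = ⟨0, 0, 1, 0⟩ := ⟨_, rfl⟩
  obtain ⟨k, hk⟩ : ∃ i : Quaternion ℝ, i = ⟨0, 0, 0, 1⟩ := ⟨_, rfl⟩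
  have i0 : i.re = 0 := by rw [hi]
  have i1 : i.imI = 1 := by rw [hi]
  have i2 : i.imJ = 0 := by rw [hi]
  have i3 : i.imK = 0 := by rw [hi]
  have j0 : j.re = 0 := by rw [hj]
  have j1 : j.imI = 0 := by rw [hj]
  have j2 : j.imJ = 1 := by rw [hj]
  have j3 : j.imK = 0 := by rw [hj]
  have k0 : k.re = 0 := by rw [hk]
  have k1 : k.imI = 0 := by rw [hk]
  have k2 : k.imJ = 0 := by rw [hk]
  have k3 : k.imK = 1 := by rw [hk]
  have a0 := f.inner_map_map i 1
  have b0 := f.inner_map_map j 1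
  have c0 := f.inner_map_map k 1
  have aa := f.inner_map_map i i
  have bb := f.inner_map_map j j
  have cc := f.inner_map_map k k
  have ab := f.inner_map_map i j
  rw [hf1] at a0 b0 c0
  have hdec : ∀ x : Quaternion ℝ, x = x.re • (1 : Quaternion ℝ) + x.imI • i + x.imJ • j + x.imK • k := by
    intro x
    ext <;> simp [conj_one_re, conj_one_imI, conj_one_imJ, conj_one_imK, conj_zero_re, conj_zero_imI, conj_zero_imJ, conj_zero_imK, i0, i1, i2, i3, j0, j1, j2, j3, k0, k1, k2, k3]
  have hfx : ∀ x, f x = x.re • (1 : Quaternion ℝ) + x.imI • f i + x.imJ • f j + x.imK • f k := by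
    intro x
    conv_lhs => rw [hdec x]
    simp only [map_add, map_smul, hf1]
  simp only [Quaternion.inner_def] at a0 b0 c0 aa bb cc ab
  let B : Module.Basis (Fin 4) ℝ (Quaternion ℝ) := QuaternionAlgebra.basisOneIJK (-1 : ℝ) 0 (-1)
  have hB : ∀ p q, (LinearMap.toMatrix B B f.toLinearEquiv.toLinearMap) p q
      = ![(f (B q)).re, (f (B q)).imI, (f (B q)).imJ, (f (B q)).imK] p := by
    intro p q
    rw [LinearMap.toMatrix_apply]
    fin_cases p <;> rfl
  have hB0 : B 0 = 1 := by
    apply B.repr.injective; ext p; rw [B.repr_self]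
    change _ = ![(1 : Quaternion ℝ).re, (1 : Quaternion ℝ).imI, (1 : Quaternion ℝ).imJ, (1 : Quaternion ℝ).imK] p
    fin_cases p <;> simp [conj_one_re, conj_one_imI, conj_one_imJ, conj_one_imK, conj_zero_re, conj_zero_imI, conj_zero_imJ, conj_zero_imK, i0, i1, i2, i3, j0, j1, j2, j3, k0, k1, k2, k3]
  have hB1 : B 1 = i := by
    apply B.repr.injective; ext p; rw [B.repr_self]
    change _ = ![(i : Quaternion ℝ).re, (i : Quaternion ℝ).imI, (i : Quaternion ℝ).imJ, (i : Quaternion ℝ).imK] p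
    fin_cases p <;> simp [conj_one_re, conj_one_imI, conj_one_imJ, conj_one_imK, conj_zero_re, conj_zero_imI, conj_zero_imJ, conj_zero_imK, i0, i1, i2, i3, j0, j1, j2, j3, k0, k1, k2, k3]
  have hB2 : B 2 = j := by
    apply B.repr.injective; ext p; rw [B.repr_self]
    change _ = ![(j : Quaternion ℝ).re, (j : Quaternion ℝ).imI, (j : Quaternion ℝ).imJ, (j : Quaternion ℝ).imK] p
    fin_cases p <;> simp [conj_one_re, conj_one_imI, conj_one_imJ, conj_one_imK, conj_zero_re, conj_zero_imI, conj_zero_imJ, conj_zero_imK, i0, i1, i2, i3, j0, j1, j2, j3, k0, k1, k2, k3]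
  have hB3 : B 3 = k := by
    apply B.repr.injective; ext p; rw [B.repr_self]
    change _ = ![(k : Quaternion ℝ).re, (k : Quaternion ℝ).imI, (k : Quaternion ℝ).imJ, (k : Quaternion ℝ).imK] p
    fin_cases p <;> simp [conj_one_re, conj_one_imI, conj_one_imJ, conj_one_imK, conj_zero_re, conj_zero_imI, conj_zero_imJ, conj_zero_imK, i0, i1, i2, i3, j0, j1, j2, j3, k0, k1, k2, k3]
  rw [← LinearMap.det_toMatrix B, Matrix.det_succ_row_zero] at hdet
  simp [Fin.sum_univ_four, Matrix.det_fin_three, hB, Fin.succAbove, hB0, hB1, hB2, hB3, hf1] at hdet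
  generalize f i = a at *
  generalize f j = b at *
  generalize f k = c at *
  obtain ⟨x, hx⟩ := conj_aux_exists a b c i j k hi hj hk
  have ii : i * i = -1 := by ext <;> simp [conj_one_re, conj_one_imI, conj_one_imJ, conj_one_imK, conj_zero_re, conj_zero_imI, conj_zero_imJ, conj_zero_imK, i0, i1, i2, i3, j0, j1, j2, j3, k0, k1, k2, k3]
  have jj : j * j = -1 := by ext <;> simp [conj_one_re, conj_one_imI, conj_one_imJ, conj_one_imK, conj_zero_re, conj_zero_imI, conj_zero_imJ, conj_zero_imK, i0, i1, i2, i3, j0, j1, j2, j3, k0, k1, k2, k3]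
  have ij : i * j = k := by ext <;> simp [conj_one_re, conj_one_imI, conj_one_imJ, conj_one_imK, conj_zero_re, conj_zero_imI, conj_zero_imJ, conj_zero_imK, i0, i1, i2, i3, j0, j1, j2, j3, k0, k1, k2, k3]
  have ji : j * i = -k := by ext <;> simp [conj_one_re, conj_one_imI, conj_one_imJ, conj_one_imK, conj_zero_re, conj_zero_imI, conj_zero_imJ, conj_zero_imK, i0, i1, i2, i3, j0, j1, j2, j3, k0, k1, k2, k3]
  have azero : a.re = 0 := by simpa [conj_one_re, conj_one_imI, conj_one_imJ, conj_one_imK, conj_zero_re, conj_zero_imI, conj_zero_imJ, conj_zero_imK, i0, i1, i2, i3, j0, j1, j2, j3, k0, k1, k2, k3] using a0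
  have bzero : b.re = 0 := by simpa [conj_one_re, conj_one_imI, conj_one_imJ, conj_one_imK, conj_zero_re, conj_zero_imI, conj_zero_imJ, conj_zero_imK, i0, i1, i2, i3, j0, j1, j2, j3, k0, k1, k2, k3] using b0
  have czero : c.re = 0 := by simpa [conj_one_re, conj_one_imI, conj_one_imJ, conj_one_imK, conj_zero_re, conj_zero_imI, conj_zero_imJ, conj_zero_imK, i0, i1, i2, i3, j0, j1, j2, j3, k0, k1, k2, k3] using c0
  simp [conj_one_re, conj_one_imI, conj_one_imJ, conj_one_imK, conj_zero_re, conj_zero_imI, conj_zero_imJ, conj_zero_imK, i0, i1, i2, i3, j0, j1, j2, j3, k0, k1, k2, k3, azero, bzero, czero] at aa bb cc ab hdet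
  obtain ⟨haa, hbb, hab, hba⟩ := conj_aux_cross a b c azero bzero czero (by linarith) (by linarith)
    (by linarith) (by linarith) (by linarith)
  clear hi hj hk aa bb cc ab hdet a0 b0 c0
  obtain ⟨v, hv⟩ : ∃ v, v = x - a * x * i - b * x * j - c * x * k := ⟨_, rfl⟩
  rw [← hv] at hx
  have hac : a * c = -b := by rw [← hab, ← mul_assoc, haa, neg_one_mul]
  have hbc : b * c = a := by
    rw [← neg_eq_iff_eq_neg.2 hba, mul_neg, ← mul_assoc, hbb, neg_one_mul, neg_neg]
  have ki : k * i = j := by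
    rw [← neg_eq_iff_eq_neg.2 ji, neg_mul, mul_assoc, ii, mul_neg_one, neg_neg]
  have kj : k * j = -i := by rw [← ij, mul_assoc, jj, mul_neg_one]
  have hav : a * v = v * i := by
    rw [hv]
    simp only [mul_sub, sub_mul, ← mul_assoc, haa, hab, hac]
    simp only [mul_assoc, ii, ji, ki]
    simp only [neg_mul, mul_neg, one_mul, mul_one]
    abel
  have hbv : b * v = v * j := by
    rw [hv]
    simp only [mul_sub, sub_mul, ← mul_assoc, hba, hbb, hbc]
    simp only [mul_assoc, ij, jj, kj]
    simp only [neg_mul, mul_neg, one_mul, mul_one]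
    abel
  have hcv : c * v = v * k := by
    rw [← hab, ← ij, mul_assoc, hbv, ← mul_assoc, hav, mul_assoc]
  have hfv : ∀ y, f y * v = v * y := by
    intro y
    conv_rhs => rw [hdec y]
    rw [hfx y]
    simp only [add_mul, mul_add, smul_mul_assoc, mul_smul_comm, hav, hbv, hcv, one_mul, mul_one]
  have hn : ‖v‖ ≠ 0 := norm_ne_zero_iff.2 hx
  have hu : ‖(‖v‖⁻¹ • v)‖ = 1 := by
    rw [norm_smul, norm_inv, norm_norm, inv_mul_cancel₀ hn]
  refine ⟨‖v‖⁻¹ • v, hu, fun y => ?_⟩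
  have hu0 : ‖v‖⁻¹ • v ≠ 0 := by
    rw [← norm_ne_zero_iff, hu]; exact one_ne_zero
  rw [eq_mul_inv_iff_mul_eq₀ hu0, mul_smul_comm, smul_mul_assoc, hfv]
end

section
/- Let f be an ℝ-linear isometric equivalence of ℍ onto itself with determinant (as an ℝ-linear endomorphism of ℍ) equal to 1. Then there exist unit quaternions u₁ and u₂ such that f(x) = u₁ * x * u₂⁻¹ for all x ∈ ℍ. (Equivalently, the homomorphism φ : S³ × S³ → SO(4), φ(u₁,u₂)(x) = u₁ x u₂⁻¹, is surjective.) -/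
open Quaternion in
lemma aux_refl (v : ℍ[ℝ]) (hv : ‖v‖ = 1) (x : ℍ[ℝ]) :
    (ℝ ∙ v)ᗮ.reflection x = -v * star x * v := by
  rw [Submodule.reflection_orthogonal_apply, Submodule.reflection_singleton_apply]
  have h := Quaternion.normSq_eq_norm_mul_self v
  rw [hv, Quaternion.normSq_def'] at h
  simp only [hv, Quaternion.inner_def, two_smul]
  ext <;> simp
  · linear_combination (-x.re) * h
  · linear_combination (-x.imI) * h
  · linear_combination (-x.imJ) * h
  · linear_combination (-x.imK) * h

open Quaternion in
lemma aux_det (v : ℍ[ℝ]) (hv : v ≠ 0) :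
    LinearMap.det ((ℝ ∙ v)ᗮ.reflection).toLinearEquiv.toLinearMap = -1 := by
  have := Submodule.det_reflection (𝕜 := ℝ) (ℝ ∙ v)ᗮ
  rw [Submodule.orthogonal_orthogonal, finrank_span_singleton hv] at this
  simpa using this

open Quaternion in
lemma aux_list (l : List ℍ[ℝ]) : ∀ f : ℍ[ℝ] ≃ₗᵢ[ℝ] ℍ[ℝ],
    f = (l.map fun v => (ℝ ∙ v)ᗮ.reflection).prod →
    (∃ a b : ℍ[ℝ], ‖a‖ = 1 ∧ ‖b‖ = 1 ∧ ∀ x, f x = a * x * b) ∨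
    (LinearMap.det f.toLinearEquiv.toLinearMap = -1 ∧
      ∃ a b : ℍ[ℝ], ‖a‖ = 1 ∧ ‖b‖ = 1 ∧ ∀ x, f x = a * star x * b) := by
  suffices H : ∀ f : ℍ[ℝ] ≃ₗᵢ[ℝ] ℍ[ℝ],
    f = (l.map fun v => (ℝ ∙ v)ᗮ.reflection).prod →
    (LinearMap.det f.toLinearEquiv.toLinearMap = 1 ∧
      ∃ a b : ℍ[ℝ], ‖a‖ = 1 ∧ ‖b‖ = 1 ∧ ∀ x, f x = a * x * b) ∨
    (LinearMap.det f.toLinearEquiv.toLinearMap = -1 ∧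
      ∃ a b : ℍ[ℝ], ‖a‖ = 1 ∧ ‖b‖ = 1 ∧ ∀ x, f x = a * star x * b) by
    intro f hf
    exact (H f hf).imp (fun h => h.2) id
  induction l with
  | nil =>
    rintro f rfl
    left
    refine ⟨LinearMap.det_id, 1, 1, by simp, by simp, fun x => by simp⟩
  | cons v l ih =>
    rintro f rfl
    specialize ih _ rfl
    rw [List.map_cons, List.prod_cons]
    generalize (l.map fun v => (ℝ ∙ v)ᗮ.reflection).prod = g at ih ⊢
    by_cases hv : v = 0
    · have : (ℝ ∙ v)ᗮ.reflection = 1 := by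
        subst hv
        ext1 x
        apply Submodule.reflection_mem_subspace_eq_self
        simp
      rw [this, one_mul]
      exact ih
    have hd : LinearMap.det ((ℝ ∙ v)ᗮ.reflection * g).toLinearEquiv.toLinearMap =
        - LinearMap.det g.toLinearEquiv.toLinearMap := by
      have h2 : ((ℝ ∙ v)ᗮ.reflection * g).toLinearEquiv.toLinearMap =
        ((ℝ ∙ v)ᗮ.reflection).toLinearEquiv.toLinearMap ∘ₗ g.toLinearEquiv.toLinearMap := rfl
      rw [h2, LinearMap.det_comp, aux_det v hv, neg_one_mul]
    obtain ⟨w, hw, hwr⟩ : ∃ w : ℍ[ℝ], ‖w‖ = 1 ∧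
        ∀ x, (ℝ ∙ v)ᗮ.reflection x = -w * star x * w := by
      have hn : ‖v‖ ≠ 0 := norm_ne_zero_iff.2 hv
      refine ⟨‖v‖⁻¹ • v, by rw [norm_smul]; simp [hn], fun x => ?_⟩
      rw [← aux_refl _ (by rw [norm_smul]; simp [hn])]
      have hs : (ℝ ∙ (‖v‖⁻¹ • v)) = ℝ ∙ v :=
        Submodule.span_singleton_smul_eq (IsUnit.mk0 _ (inv_ne_zero hn)) v
      simp only [hs]
    rw [hd]
    rcases ih with ⟨h1, a, b, ha, hb, h⟩ | ⟨h1, a, b, ha, hb, h⟩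
    · right
      refine ⟨by rw [h1], -w * star b, star a * w, by simp [hw, hb], by simp [hw, ha], fun x => ?_⟩
      rw [LinearIsometryEquiv.coe_mul, Function.comp_apply, h, hwr]
      simp [mul_assoc]
    · left
      refine ⟨by rw [h1, neg_neg], -w * star b, star a * w, by simp [hw, hb], by simp [hw, ha], fun x => ?_⟩
      rw [LinearIsometryEquiv.coe_mul, Function.comp_apply, h, hwr]
      simp [mul_assoc]

/-- Every ℝ-linear isometric equivalence of `ℍ` with determinant `1` is of the form
`x ↦ u₁ * x * u₂⁻¹` for unit quaternions `u₁, u₂`; i.e. `φ : S³ × S³ → SO(4)` is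
surjective. -/
theorem phi_surjective_onto_SO4 (f : Quaternion ℝ ≃ₗᵢ[ℝ] Quaternion ℝ)
    (hdet : LinearMap.det f.toLinearEquiv.toLinearMap = 1) :
    ∃ u₁ u₂ : Quaternion ℝ, ‖u₁‖ = 1 ∧ ‖u₂‖ = 1 ∧
      ∀ x : Quaternion ℝ, f x = u₁ * x * u₂⁻¹ := by
  obtain ⟨l, -, hl⟩ := f.reflections_generate_dim
  rcases aux_list l f hl with ⟨a, b, ha, hb, h⟩ | ⟨h, -⟩
  · exact ⟨a, b⁻¹, ha, by simp [hb], fun x => by rw [h, inv_inv]⟩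
  · rw [hdet] at h
    norm_num at h
end

section
/- Let u₁, u₂, v₁, v₂ be unit quaternions such that u₁ * x * u₂⁻¹ = v₁ * x * v₂⁻¹ for all quaternions x. Then u₁ * y * u₁⁻¹ = v₁ * y * v₁⁻¹ and u₂ * y * u₂⁻¹ = v₂ * y * v₂⁻¹ for all quaternions y. (This is the well-definedness underlying the unique homomorphism ϕ : SO(4) → SO(3) × SO(3) with ϕ ∘ φ = ψ × ψ.) -/
/-- If two pairs of unit quaternions induce the same rotation `x ↦ u₁ x u₂⁻¹` of `ℍ`,
then the corresponding conjugations agree; this is the well-definedness underlying the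
unique homomorphism `ϕ : SO(4) → SO(3) × SO(3)` with `ϕ ∘ φ = ψ × ψ`. -/
theorem phi_factors_through_psi (u₁ u₂ v₁ v₂ : Quaternion ℝ)
    (hu₁ : ‖u₁‖ = 1) (hu₂ : ‖u₂‖ = 1) (hv₁ : ‖v₁‖ = 1) (hv₂ : ‖v₂‖ = 1)
    (h : ∀ x : Quaternion ℝ, u₁ * x * u₂⁻¹ = v₁ * x * v₂⁻¹) :
    (∀ y : Quaternion ℝ, u₁ * y * u₁⁻¹ = v₁ * y * v₁⁻¹) ∧
    (∀ y : Quaternion ℝ, u₂ * y * u₂⁻¹ = v₂ * y * v₂⁻¹) := by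
  have key₁ : ∀ a b y : Quaternion ℝ, b ≠ 0 →
      a * y * a⁻¹ = (a * y * b⁻¹) * (a * 1 * b⁻¹)⁻¹ := by
    intro a b y hb
    rw [mul_one, mul_inv_rev, inv_inv, mul_assoc (a * y), inv_mul_cancel_left₀ hb]
  have key₂ : ∀ a b y : Quaternion ℝ, a ≠ 0 →
      b * y * b⁻¹ = (a * 1 * b⁻¹)⁻¹ * (a * y * b⁻¹) := by
    intro a b y ha
    rw [mul_one, mul_inv_rev, inv_inv, mul_assoc a, mul_assoc b a⁻¹,
      inv_mul_cancel_left₀ ha, mul_assoc]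
  have ne : ∀ a : Quaternion ℝ, ‖a‖ = 1 → a ≠ 0 := by
    rintro a ha rfl
    simp at ha
  constructor
  · intro y
    rw [key₁ u₁ u₂ y (ne _ hu₂), key₁ v₁ v₂ y (ne _ hv₂), h, h]
  · intro y
    rw [key₂ u₁ u₂ y (ne _ hu₁), key₂ v₁ v₂ y (ne _ hv₁), h, h]
end

section
/- Define the Hopf map on unit quaternions by h(x) = (conj x) * i * x. Then: (1) for every unit quaternion x, h(x) is a purely imaginary quaternion of norm 1; and (2) for every purely imaginary quaternion p with ‖p‖ = 1 there exists a unit quaternion x with h(x) = p. In other words, h maps the unit quaternions onto the unit sphere of the purely imaginary quaternions. -/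
/-- The quaternion imaginary unit `i`. -/
def quaternionI : Quaternion ℝ := ⟨0, 1, 0, 0⟩

/-- The Hopf map `h(x) = (conj x) * i * x`. -/
noncomputable def hopfMap (x : Quaternion ℝ) : Quaternion ℝ := star x * quaternionI * x

/-- The Hopf map sends every unit quaternion to a purely imaginary quaternion of
norm `1`, and every purely imaginary quaternion of norm `1` arises this way: `h` maps
the unit quaternions onto the unit sphere of the purely imaginary quaternions. -/
theorem hopfMap_onto_unit_imaginary_sphere :
    (∀ x : Quaternion ℝ, ‖x‖ = 1 → (hopfMap x).re = 0 ∧ ‖hopfMap x‖ = 1) ∧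
    (∀ p : Quaternion ℝ, p.re = 0 → ‖p‖ = 1 →
      ∃ x : Quaternion ℝ, ‖x‖ = 1 ∧ hopfMap x = p) := by
  have hn : ∀ q : Quaternion ℝ, ‖q‖ = 1 ↔ q.re ^ 2 + q.imI ^ 2 + q.imJ ^ 2 + q.imK ^ 2 = 1 := by
    intro q
    rw [← Quaternion.normSq_def', Quaternion.normSq_eq_norm_mul_self]
    constructor
    · intro h
      rw [h, one_mul]
    · intro h
      nlinarith [norm_nonneg q]
  have i0 : quaternionI.re = 0 := rfl
  have i1 : quaternionI.imI = 1 := rfl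
  have i2 : quaternionI.imJ = 0 := rfl
  have i3 : quaternionI.imK = 0 := rfl
  have hex : ∀ r a b c : ℝ, ∃ x : Quaternion ℝ, x.re = r ∧ x.imI = a ∧ x.imJ = b ∧ x.imK = c :=
    fun r a b c => ⟨⟨r, a, b, c⟩, rfl, rfl, rfl, rfl⟩
  refine ⟨fun x hx => ⟨?_, ?_⟩, ?_⟩
  · simp [hopfMap, i0, i1, i2, i3]
    ring
  · have hi : ‖quaternionI‖ = 1 := by
      rw [hn, i0, i1, i2, i3]
      norm_num
    simp [hopfMap, norm_mul, hx, hi]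
  · intro p hr hp
    rw [hn, hr] at hp
    by_cases ha : p.imI = -1
    · rw [ha] at hp
      have hb : p.imJ = 0 := by nlinarith [sq_nonneg p.imJ, sq_nonneg p.imK]
      have hc : p.imK = 0 := by nlinarith [sq_nonneg p.imJ, sq_nonneg p.imK]
      obtain ⟨x, x0, x1, x2, x3⟩ := hex 0 0 1 0
      refine ⟨x, ?_, ?_⟩
      · rw [hn, x0, x1, x2, x3]
        norm_num
      · ext <;> simp [hopfMap, i0, i1, i2, i3, x0, x1, x2, x3, hr, ha, hb, hc]
    · generalize haa : p.imI = a at *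
      generalize hbb : p.imJ = b at *
      generalize hcc : p.imK = c at *
      have hpos : 0 < (1 + a) / 2 := by
        have h1 : -1 ≤ a := by nlinarith [sq_nonneg b, sq_nonneg c]
        have h2 : -1 < a := lt_of_le_of_ne h1 (Ne.symm ha)
        linarith
      obtain ⟨s, hs, hs2⟩ : ∃ s : ℝ, 0 < s ∧ s ^ 2 = (1 + a) / 2 :=
        ⟨√((1 + a) / 2), Real.sqrt_pos.2 hpos, Real.sq_sqrt hpos.le⟩
      have hsum : (b / (2 * s)) ^ 2 + (c / (2 * s)) ^ 2 = (1 - a) / 2 := by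
        have h4 : (2 * s) ^ 2 = 2 * (1 + a) := by rw [mul_pow, hs2]; ring
        rw [div_pow, div_pow, h4, ← add_div, div_eq_iff (by linarith)]
        linarith
      have hy : 2 * s * (b / (2 * s)) = b := by field_simp
      have hz : 2 * s * (c / (2 * s)) = c := by field_simp
      generalize b / (2 * s) = y at *
      generalize c / (2 * s) = z at *
      obtain ⟨x, x0, x1, x2, x3⟩ := hex 0 s y z
      refine ⟨x, ?_, ?_⟩
      · rw [hn, x0, x1, x2, x3]
        linarith
      · ext <;> simp [hopfMap, i0, i1, i2, i3, x0, x1, x2, x3, hr, haa, hbb, hcc] <;> linarith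
end

section
/- Let x and y be unit quaternions and define the Hopf map h(x) = (conj x) * i * x. Then h(x) = h(y) if and only if there exist real numbers a, b with a² + b² = 1 such that y = (a + b·i) * x. That is, the fibers of the Hopf map are exactly the orbits of the left multiplication action of the circle of unit complex numbers {a + b·i : a² + b² = 1} on the unit quaternions. -/
/-- Two unit quaternions have the same image under the Hopf map iff they lie in the
same orbit of the left-multiplication action of the circle `{a + b·i : a² + b² = 1}`. -/
theorem hopfMap_fibers (x y : Quaternion ℝ) (hx : ‖x‖ = 1) (hy : ‖y‖ = 1) :
    hopfMap x = hopfMap y ↔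
      ∃ a b : ℝ, a ^ 2 + b ^ 2 = 1 ∧
        y = ((a : Quaternion ℝ) + b • quaternionI) * x := by
  have key : ∀ z : Quaternion ℝ, ‖z‖ = 1 → z * star z = 1 ∧ star z * z = 1 := by
    intro z hz
    have h : Quaternion.normSq z = 1 := by
      rw [Quaternion.normSq_eq_norm_mul_self, hz, one_mul]
    rw [Quaternion.self_mul_star, Quaternion.star_mul_self, h]
    simp
  obtain ⟨hx1, hx2⟩ := key x hx
  obtain ⟨hy1, hy2⟩ := key y hy
  have i0 : quaternionI.re = 0 := rfl
  have i1 : quaternionI.imI = 1 := rfl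
  have i2 : quaternionI.imJ = 0 := rfl
  have i3 : quaternionI.imK = 0 := rfl
  unfold hopfMap
  constructor
  · intro h
    have hc : (y * star x) * quaternionI = quaternionI * (y * star x) := by
      calc (y * star x) * quaternionI
          = y * (star x * quaternionI * x) * star x := by
            simp only [mul_assoc, hx1, mul_one]
        _ = (y * star y) * quaternionI * (y * star x) := by
            rw [h]; simp only [mul_assoc]
        _ = quaternionI * (y * star x) := by rw [hy1, one_mul]
    have hyx : y = (y * star x) * x := by rw [mul_assoc, hx2, mul_one]
    have hn : ‖y * star x‖ = 1 := by rw [norm_mul, norm_star, hx, hy, one_mul]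
    generalize y * star x = u at hc hyx hn
    have hJ := congrArg (fun q : Quaternion ℝ => q.imJ) hc
    have hK := congrArg (fun q : Quaternion ℝ => q.imK) hc
    simp [i0, i1, i2, i3] at hJ hK
    have hJ0 : u.imJ = 0 := by linarith
    have hK0 : u.imK = 0 := by linarith
    have hs : Quaternion.normSq u = 1 := by
      rw [Quaternion.normSq_eq_norm_mul_self, hn, one_mul]
    rw [Quaternion.normSq_def', hJ0, hK0] at hs
    refine ⟨u.re, u.imI, by linarith, ?_⟩
    have hu : ((u.re : ℝ) : Quaternion ℝ) + u.imI • quaternionI = u := by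
      ext <;> simp [i0, i1, i2, i3, hJ0, hK0]
    rw [hu]
    exact hyx
  · rintro ⟨a, b, hab, rfl⟩
    have hw : star ((a : Quaternion ℝ) + b • quaternionI) * quaternionI
        * ((a : Quaternion ℝ) + b • quaternionI) = quaternionI := by
      ext <;> simp [i0, i1, i2, i3] <;> first | ring1 | linear_combination hab
    calc star x * quaternionI * x
        = star x * (star ((a : Quaternion ℝ) + b • quaternionI) * quaternionI
        * ((a : Quaternion ℝ) + b • quaternionI)) * x := by rw [hw]
      _ = _ := by rw [star_mul]; simp only [mul_assoc]
end
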